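/- Let Q_0, Q_1, …, Q_T : Ω → (S×A → ℝ) (T ≥ 1) be random functions and ε ≥ 0 be such that 𝔼[‖Q_i − 𝒯Q_{i−1}‖₂²] ≤ ε for every i ∈ {1,…,T}. Then 𝔼[‖Q_T − Q*‖_∞²] ≤ ((1+γ²)/(1−γ²)) · ε · (2/(1−γ²)) + ((γ²+1)/2)^T · 𝔼[‖Q_0 − Q*‖_∞²]. -/

import Mathlib

open MeasureTheory ProbabilityTheory Finset

/-- sup norm of a real function on a finite nonempty type. -/
noncomputable def supNorm {ι : Type*} [Fintype ι] [Nonempty ι] (f : ι → ℝ) : ℝ :=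
  Finset.univ.sup' Finset.univ_nonempty (fun i => |f i|)

/-- squared Euclidean norm of a real function on a finite type. -/
def sqNorm {ι : Type*} [Fintype ι] (f : ι → ℝ) : ℝ := ∑ i, (f i) ^ 2

/-- Bellman optimality operator. -/
noncomputable def bellman {S A : Type*} [Fintype S] [Fintype A] [Nonempty A]
    (P : S → A → S → ℝ) (r : S → A → ℝ) (γ : ℝ) (Q : S × A → ℝ) : S × A → ℝ :=
  fun x => r x.1 x.2 + γ * ∑ s' : S, P x.1 x.2 s' *
    Finset.univ.sup' Finset.univ_nonempty (fun a' => Q (s', a'))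


lemma abs_le_supNorm' {ι : Type*} [Fintype ι] [Nonempty ι] (f : ι → ℝ) (i : ι) :
    |f i| ≤ supNorm f :=
  Finset.le_sup' (fun i => |f i|) (Finset.mem_univ i)

lemma sup'_le_add {A : Type*} [Fintype A] [Nonempty A] (f g : A → ℝ) (M : ℝ)
    (h : ∀ a, |f a - g a| ≤ M) :
    Finset.univ.sup' Finset.univ_nonempty f ≤ Finset.univ.sup' Finset.univ_nonempty g + M := by
  apply Finset.sup'_le
  intro a _
  have h1 := Finset.le_sup' g (Finset.mem_univ a)
  have h2 := (abs_le.mp (h a)).2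
  linarith

lemma bellman_contr {S A : Type*} [Fintype S] [Fintype A] [Nonempty S] [Nonempty A]
    (P : S → A → S → ℝ) (hP0 : ∀ s a s', 0 ≤ P s a s') (hP1 : ∀ s a, ∑ s', P s a s' = 1)
    (r : S → A → ℝ) (γ : ℝ) (hγ : 0 ≤ γ) (Q R : S × A → ℝ) (x : S × A) :
    |bellman P r γ Q x - bellman P r γ R x| ≤ γ * supNorm (fun x => Q x - R x) := by
  set M := supNorm (fun x => Q x - R x) with hM
  have hb : ∀ y, |Q y - R y| ≤ M := fun y => abs_le_supNorm' (fun x => Q x - R x) y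
  have hb' : ∀ y, |R y - Q y| ≤ M := fun y => by rw [abs_sub_comm]; exact hb y
  have key : ∀ U V : S × A → ℝ, (∀ y, |U y - V y| ≤ M) →
      bellman P r γ U x ≤ bellman P r γ V x + γ * M := by
    intro U V h
    unfold bellman
    have : ∑ s' : S, P x.1 x.2 s' *
        Finset.univ.sup' Finset.univ_nonempty (fun a' => U (s', a')) ≤
        ∑ s' : S, P x.1 x.2 s' *
        (Finset.univ.sup' Finset.univ_nonempty (fun a' => V (s', a')) + M) := by
      apply Finset.sum_le_sum
      intro s' _
      exact mul_le_mul_of_nonneg_left (sup'_le_add _ _ M (fun a => h (s', a))) (hP0 _ _ _)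
    simp only [mul_add, Finset.sum_add_distrib, ← Finset.sum_mul, hP1, one_mul] at this
    have := mul_le_mul_of_nonneg_left this hγ
    linarith
  rw [abs_le]
  constructor
  · linarith [key R Q hb']
  · linarith [key Q R hb]

lemma young_ineq (γ : ℝ) (hγ : γ ∈ Set.Ioo (0 : ℝ) 1) (d M : ℝ) :
    (d + γ * M) ^ 2 ≤ ((1 + γ ^ 2) / (1 - γ ^ 2)) * d ^ 2 + ((γ ^ 2 + 1) / 2) * M ^ 2 := by
  have hu : 0 < 1 - γ ^ 2 := by nlinarith [hγ.1, hγ.2]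
  have : ((1 + γ ^ 2) / (1 - γ ^ 2)) * d ^ 2 + ((γ ^ 2 + 1) / 2) * M ^ 2 - (d + γ * M) ^ 2
      = (2 * γ * d - (1 - γ ^ 2) * M) ^ 2 / (2 * (1 - γ ^ 2)) := by
    field_simp
    ring
  have h2 : 0 ≤ (2 * γ * d - (1 - γ ^ 2) * M) ^ 2 / (2 * (1 - γ ^ 2)) := by positivity
  linarith

lemma step_pointwise {S A : Type*} [Fintype S] [Fintype A] [Nonempty S] [Nonempty A]
    (P : S → A → S → ℝ) (hP0 : ∀ s a s', 0 ≤ P s a s') (hP1 : ∀ s a, ∑ s', P s a s' = 1)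
    (r : S → A → ℝ) (γ : ℝ) (hγ : γ ∈ Set.Ioo (0 : ℝ) 1)
    (Qs : S × A → ℝ) (hQ : bellman P r γ Qs = Qs) (Q R : S × A → ℝ) :
    supNorm (fun x => Q x - Qs x) ^ 2 ≤
      ((1 + γ ^ 2) / (1 - γ ^ 2)) * sqNorm (fun x => Q x - bellman P r γ R x)
        + ((γ ^ 2 + 1) / 2) * supNorm (fun x => R x - Qs x) ^ 2 := by
  have hu : 0 < 1 - γ ^ 2 := by nlinarith [hγ.1, hγ.2]
  obtain ⟨x, -, hx⟩ := Finset.exists_mem_eq_sup' (Finset.univ_nonempty (α := S × A))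
    (fun x => |Q x - Qs x|)
  have hx' : supNorm (fun x => Q x - Qs x) = |Q x - Qs x| := hx
  rw [hx']
  have hc := bellman_contr P hP0 hP1 r γ hγ.1.le R Qs x
  rw [hQ] at hc
  have ht : |Q x - Qs x| ≤ |Q x - bellman P r γ R x| + γ * supNorm (fun x => R x - Qs x) :=
    (abs_sub_le _ (bellman P r γ R x) _).trans (by linarith)
  have h1 := pow_le_pow_left₀ (abs_nonneg _) ht 2
  have h2 := young_ineq γ hγ |Q x - bellman P r γ R x| (supNorm (fun x => R x - Qs x))
  have h3 : |Q x - bellman P r γ R x| ^ 2 ≤ sqNorm (fun x => Q x - bellman P r γ R x) := by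
    rw [sq_abs]
    exact Finset.single_le_sum (f := fun x => (Q x - bellman P r γ R x) ^ 2)
      (fun i _ => sq_nonneg _) (Finset.mem_univ x)
  have hC : 0 ≤ (1 + γ ^ 2) / (1 - γ ^ 2) := by positivity
  have h4 := mul_le_mul_of_nonneg_left h3 hC
  linarith

theorem squared_error_recursion_accumulated
    {S A : Type*} [Fintype S] [Fintype A] [Nonempty S] [Nonempty A]
    {Ω : Type*} [MeasurableSpace Ω] (μ : Measure Ω) [IsProbabilityMeasure μ]
    (P : S → A → S → ℝ) (hP0 : ∀ s a s', 0 ≤ P s a s') (hP1 : ∀ s a, ∑ s', P s a s' = 1)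
    (r : S → A → ℝ) (hr : ∀ s a, |r s a| ≤ 1)
    (γ : ℝ) (hγ : γ ∈ Set.Ioo (0 : ℝ) 1)
    (Qstar : S × A → ℝ) (hQstar : bellman P r γ Qstar = Qstar)
    (T : ℕ) (hT : 1 ≤ T) (Q : ℕ → Ω → S × A → ℝ) (hQmeas : ∀ k, Measurable (Q k))
    (ε : ℝ) (hε0 : 0 ≤ ε)
    (hmomInt : ∀ i ∈ Finset.Icc 1 T,
      Integrable (fun ω => sqNorm (fun x => Q i ω x - bellman P r γ (Q (i - 1) ω) x)) μ)
    (hmom : ∀ i ∈ Finset.Icc 1 T,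
      ∫ ω, sqNorm (fun x => Q i ω x - bellman P r γ (Q (i - 1) ω) x) ∂μ ≤ ε)
    (hint : ∀ k, Integrable (fun ω => (supNorm (fun x => Q k ω x - Qstar x)) ^ 2) μ) :
    ∫ ω, (supNorm (fun x => Q T ω x - Qstar x)) ^ 2 ∂μ ≤
      ((1 + γ ^ 2) / (1 - γ ^ 2)) * ε * (2 / (1 - γ ^ 2))
        + ((γ ^ 2 + 1) / 2) ^ T * ∫ ω, (supNorm (fun x => Q 0 ω x - Qstar x)) ^ 2 ∂μ := by
  have hu : 0 < 1 - γ ^ 2 := by nlinarith [hγ.1, hγ.2]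
  have hC : 0 ≤ (1 + γ ^ 2) / (1 - γ ^ 2) := by positivity
  have main : ∀ k, k ≤ T → ∫ ω, (supNorm (fun x => Q k ω x - Qstar x)) ^ 2 ∂μ ≤
      ((1 + γ ^ 2) / (1 - γ ^ 2)) * ε * (2 / (1 - γ ^ 2))
        + ((γ ^ 2 + 1) / 2) ^ k * ∫ ω, (supNorm (fun x => Q 0 ω x - Qstar x)) ^ 2 ∂μ := by
    intro k
    induction k with
    | zero =>
      intro _
      have : 0 ≤ ((1 + γ ^ 2) / (1 - γ ^ 2)) * ε * (2 / (1 - γ ^ 2)) := by positivity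
      simpa using this
    | succ k ih =>
      intro hk
      have ih := ih (by omega)
      have hmem : k + 1 ∈ Finset.Icc 1 T := Finset.mem_Icc.mpr ⟨by omega, hk⟩
      have hI := hmomInt _ hmem
      have hM := hmom _ hmem
      simp only [Nat.add_sub_cancel] at hI hM
      have h1 := integral_mono (hint (k + 1))
        ((hI.const_mul ((1 + γ ^ 2) / (1 - γ ^ 2))).add
          ((hint k).const_mul ((γ ^ 2 + 1) / 2)))
        (fun ω => step_pointwise P hP0 hP1 r γ hγ Qstar hQstar (Q (k + 1) ω) (Q k ω))
      simp only [Pi.add_apply] at h1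
      rw [integral_add (hI.const_mul _) ((hint k).const_mul _), integral_const_mul,
        integral_const_mul] at h1
      have h2 := mul_le_mul_of_nonneg_left hM hC
      have h3 := mul_le_mul_of_nonneg_left ih (show 0 ≤ (γ ^ 2 + 1) / 2 by positivity)
      have h4 : ((1 + γ ^ 2) / (1 - γ ^ 2)) * ε * (2 / (1 - γ ^ 2)) =
          ((1 + γ ^ 2) / (1 - γ ^ 2)) * ε + (γ ^ 2 + 1) / 2 *
            (((1 + γ ^ 2) / (1 - γ ^ 2)) * ε * (2 / (1 - γ ^ 2))) := by
        field_simp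
        ring
      rw [pow_succ ((γ ^ 2 + 1) / 2) k, h4]
      rw [mul_add] at h3
      refine (h1.trans (add_le_add h2 h3)).trans (le_of_eq ?_)
      ring
  exact main T le_rfl
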